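/- Let L > 0 and let u : ℝ → ℝ be continuously differentiable with u(0) = 0. Then ∫₀ᴸ u(x)⁴ dx ≤ 2·( ∫₀ᴸ u(x)² dx )^{3/2} · ( ∫₀ᴸ (u'(x))² dx )^{1/2}. -/

import Mathlib

/-! Where `u` vanishes at `c`, `u x ^ 2 = 2 ∫ c..x, u * u'`. Cauchy–Schwarz turns this into Agmon's
inequality `sup |u| ^ 2 ≤ 2 ‖u‖₂ ‖u'‖₂`, and `‖u‖₄ ^ 4 ≤ sup |u| ^ 2 * ‖u‖₂ ^ 2`. -/

open MeasureTheory Set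

theorem integral_norm_mul_norm_le_sqrt_mul_sqrt {α E F : Type*} [MeasurableSpace α]
    {μ : Measure α} [NormedAddCommGroup E] [NormedAddCommGroup F] {f : α → E} {g : α → F}
    (hf : MemLp f 2 μ) (hg : MemLp g 2 μ) :
    ∫ x, ‖f x‖ * ‖g x‖ ∂μ ≤ √(∫ x, ‖f x‖ ^ 2 ∂μ) * √(∫ x, ‖g x‖ ^ 2 ∂μ) := by
  simpa [Real.sqrt_eq_rpow] using integral_mul_norm_le_Lp_mul_Lq Real.HolderConjugate.two_two
    (f := fun x ↦ ‖f x‖) (g := fun x ↦ ‖g x‖) (by simpa using hf.norm) (by simpa using hg.norm)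

theorem norm_intervalIntegral_le_intervalIntegral_norm_of_mem {E : Type*} [NormedAddCommGroup E]
    [NormedSpace ℝ E] {μ : Measure ℝ} {f : ℝ → E} {a b c x : ℝ}
    (hf : IntervalIntegrable f μ a b) (hc : c ∈ Icc a b) (hx : x ∈ Icc a b) :
    ‖∫ t in c..x, f t ∂μ‖ ≤ ∫ t in a..b, ‖f t‖ ∂μ := by
  have hab : a ≤ b := hc.1.trans hc.2
  have hsub : uIoc c x ⊆ uIoc a b := by
    rw [uIoc_of_le hab]
    exact Ioc_subset_Ioc (le_min hc.1 hx.1) (max_le hc.2 hx.2)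
  calc ‖∫ t in c..x, f t ∂μ‖ ≤ |∫ t in c..x, ‖f t‖ ∂μ| :=
        intervalIntegral.norm_integral_le_abs_integral_norm
    _ ≤ |∫ t in a..b, ‖f t‖ ∂μ| := intervalIntegral.abs_integral_mono_interval hsub
        (.of_forall fun t ↦ norm_nonneg (f t)) hf.norm
    _ = ∫ t in a..b, ‖f t‖ ∂μ :=
        abs_of_nonneg (intervalIntegral.integral_nonneg_of_forall hab fun t ↦ norm_nonneg (f t))

theorem intervalIntegral_mul_le_mul_intervalIntegral_of_le {μ : Measure ℝ} {f g : ℝ → ℝ}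
    {a b M : ℝ} (hab : a ≤ b) (hfg : IntervalIntegrable (fun t ↦ f t * g t) μ a b)
    (hg : IntervalIntegrable g μ a b) (hM : ∀ t ∈ Icc a b, f t ≤ M)
    (hg_nonneg : ∀ t ∈ Icc a b, 0 ≤ g t) :
    ∫ t in a..b, f t * g t ∂μ ≤ M * ∫ t in a..b, g t ∂μ := by
  rw [← intervalIntegral.integral_const_mul]
  exact intervalIntegral.integral_mono_on hab hfg (hg.const_mul M) fun t ht ↦
    mul_le_mul_of_nonneg_right (hM t ht) (hg_nonneg t ht)

section AbsolutelyContinuous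

variable {u : ℝ → ℝ} {a b c x : ℝ}

theorem two_mul_integral_mul_deriv_eq_sq_sub_sq (hu : AbsolutelyContinuousOnInterval u a b) :
    2 * ∫ t in a..b, u t * deriv u t = u b ^ 2 - u a ^ 2 := by
  have hparts := hu.integral_mul_deriv_eq_deriv_mul hu
  simp only [mul_comm (deriv u _)] at hparts
  linarith

theorem sq_le_two_mul_integral_abs_mul_abs_deriv (hu : AbsolutelyContinuousOnInterval u a b)
    (hc : c ∈ Icc a b) (huc : u c = 0) (hx : x ∈ Icc a b) :
    u x ^ 2 ≤ 2 * ∫ t in a..b, |u t| * |deriv u t| := by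
  have hcx : AbsolutelyContinuousOnInterval u c x :=
    hu.mono (uIcc_subset_uIcc (Icc_subset_uIcc hc) (Icc_subset_uIcc hx))
  have hint : IntervalIntegrable (fun t ↦ u t * deriv u t) volume a b :=
    hu.intervalIntegrable_deriv.continuousOn_mul hu.continuousOn
  calc u x ^ 2 = 2 * ∫ t in c..x, u t * deriv u t := by
        simp [two_mul_integral_mul_deriv_eq_sq_sub_sq hcx, huc]
    _ ≤ 2 * ∫ t in a..b, ‖u t * deriv u t‖ := by
        gcongr
        exact (le_abs_self _).trans
          (norm_intervalIntegral_le_intervalIntegral_norm_of_mem hint hc hx)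
    _ = 2 * ∫ t in a..b, |u t| * |deriv u t| := by simp only [Real.norm_eq_abs, abs_mul]

theorem sq_le_two_mul_sqrt_integral_sq_mul_sqrt_integral_deriv_sq
    (hu : AbsolutelyContinuousOnInterval u a b)
    (hu' : IntervalIntegrable (fun t ↦ deriv u t ^ 2) volume a b)
    (hc : c ∈ Icc a b) (huc : u c = 0) (hx : x ∈ Icc a b) :
    u x ^ 2 ≤ 2 * (√(∫ t in a..b, u t ^ 2) * √(∫ t in a..b, deriv u t ^ 2)) := by
  have hab : a ≤ b := hc.1.trans hc.2
  have huL2 : MemLp u 2 (volume.restrict (Ioc a b)) :=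
    (memLp_two_iff_integrable_sq hu.continuousOn.intervalIntegrable.1.aestronglyMeasurable).2
      (hu.continuousOn.pow 2).intervalIntegrable.1
  have hderivL2 : MemLp (deriv u) 2 (volume.restrict (Ioc a b)) :=
    (memLp_two_iff_integrable_sq (aestronglyMeasurable_deriv u _)).2 hu'.1
  calc u x ^ 2 ≤ 2 * ∫ t in a..b, |u t| * |deriv u t| :=
        sq_le_two_mul_integral_abs_mul_abs_deriv hu hc huc hx
    _ ≤ 2 * (√(∫ t in a..b, u t ^ 2) * √(∫ t in a..b, deriv u t ^ 2)) := by
        gcongr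
        simpa only [intervalIntegral.integral_of_le hab, Real.norm_eq_abs, sq_abs] using
          integral_norm_mul_norm_le_sqrt_mul_sqrt huL2 hderivL2

theorem gagliardo_nirenberg_L4_general (hu : AbsolutelyContinuousOnInterval u a b)
    (hu' : IntervalIntegrable (fun t ↦ deriv u t ^ 2) volume a b)
    (hc : c ∈ Icc a b) (huc : u c = 0) :
    ∫ t in a..b, u t ^ 4 ≤ 2 * (∫ t in a..b, u t ^ 2) ^ ((3 : ℝ) / 2)
      * (∫ t in a..b, deriv u t ^ 2) ^ ((1 : ℝ) / 2) := by
  have hab : a ≤ b := hc.1.trans hc.2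
  have hsq : ContinuousOn (fun t ↦ u t ^ 2) (uIcc a b) := hu.continuousOn.pow 2
  set A := ∫ t in a..b, u t ^ 2
  set B := ∫ t in a..b, deriv u t ^ 2
  have hA : 0 ≤ A := intervalIntegral.integral_nonneg_of_forall hab fun t ↦ sq_nonneg (u t)
  have hpow : A ^ ((3 : ℝ) / 2) = A * √A := by
    rw [Real.sqrt_eq_rpow, ← Real.rpow_one_add' hA (by norm_num)]
    norm_num
  calc ∫ t in a..b, u t ^ 4 = ∫ t in a..b, u t ^ 2 * u t ^ 2 := by simp only [← pow_add]
    _ ≤ 2 * (√A * √B) * A :=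
        intervalIntegral_mul_le_mul_intervalIntegral_of_le hab
          (hsq.mul hsq).intervalIntegrable hsq.intervalIntegrable
          (fun t ht ↦
            sq_le_two_mul_sqrt_integral_sq_mul_sqrt_integral_deriv_sq hu hu' hc huc ht)
          fun t _ ↦ sq_nonneg (u t)
    _ = 2 * A ^ ((3 : ℝ) / 2) * B ^ ((1 : ℝ) / 2) := by
        rw [hpow, ← Real.sqrt_eq_rpow]
        ring

end AbsolutelyContinuous

theorem gagliardo_nirenberg_L4 (L : ℝ) (hL : 0 < L) (u : ℝ → ℝ)
    (hu : ContDiff ℝ 1 u) (h0 : u 0 = 0) :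
    (∫ x in (0 : ℝ)..L, (u x) ^ 4)
      ≤ 2 * ((∫ x in (0 : ℝ)..L, (u x) ^ 2) ^ ((3 : ℝ) / 2))
        * ((∫ x in (0 : ℝ)..L, (deriv u x) ^ 2) ^ ((1 : ℝ) / 2)) :=
  gagliardo_nirenberg_L4_general hu.contDiffOn.absolutelyContinuousOnInterval
    (((hu.continuous_deriv le_rfl).pow 2).intervalIntegrable 0 L) (left_mem_Icc.2 hL.le) h0
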